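/- arXiv:2508.18682 — 2 statements merged into one kernel-verified Lean document; each statement's English description precedes it below -/
import Mathlib

section
/- Let A ∈ ℝ_{≥0}^{m×n} be a matrix with nonnegative entries whose row sums and column sums are all integers. Then there exists a matrix B ∈ ℤ_{≥0}^{m×n} with nonnegative integer entries having the same row sums and the same column sums as A and satisfying max_{i,j} |B_{ij} − A_{ij}| ≤ 1. -/
open Finset

lemma aux_two {κ : Type*} [Fintype κ] [DecidableEq κ] (f : κ → ℝ) (z : ℤ)
    (h : ∑ j, f j = (z : ℝ)) (j : κ) (hj : Int.fract (f j) ≠ 0) :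
    ∃ k, k ≠ j ∧ Int.fract (f k) ≠ 0 := by
  by_contra! hc
  apply hj
  have h1 : ∑ k ∈ univ.erase j, f k = ((∑ k ∈ univ.erase j, ⌊f k⌋ : ℤ) : ℝ) := by
    rw [Int.cast_sum]
    apply Finset.sum_congr rfl
    intro k hk
    have := hc k (Finset.ne_of_mem_erase hk)
    have h2 := Int.floor_add_fract (f k)
    linarith
  have h2 := Finset.add_sum_erase univ f (mem_univ j)
  have h3 : f j = ((z - ∑ k ∈ univ.erase j, ⌊f k⌋ : ℤ) : ℝ) := by
    rw [Int.cast_sub, ← h1]; linarith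
  rw [h3, Int.fract_intCast]

lemma aux_card {α β : Type*} [DecidableEq α] [DecidableEq β] (S : Finset α) (g : α → β)
    (h : ∀ a ∈ S, ∃ b ∈ S, b ≠ a ∧ g b = g a) : 2 * (S.image g).card ≤ S.card := by
  rw [Finset.card_eq_sum_card_image g S, mul_comm, ← smul_eq_mul]
  apply Finset.card_nsmul_le_sum
  intro x hx
  obtain ⟨a, ha, rfl⟩ := Finset.mem_image.1 hx
  obtain ⟨b, hb, hne, hg⟩ := h a ha
  have : 1 < (S.filter (fun c => g c = g a)).card :=
    Finset.one_lt_card.2 ⟨b, by simp [hb, hg], a, by simp [ha], hne⟩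
  exact this

lemma aux_D {m n : ℕ} (S : Finset (Fin m × Fin n)) (hS : S.Nonempty)
    (h1 : ∀ a ∈ S, ∃ b ∈ S, b ≠ a ∧ b.1 = a.1)
    (h2 : ∀ a ∈ S, ∃ b ∈ S, b ≠ a ∧ b.2 = a.2) :
    ∃ D : Fin m → Fin n → ℝ, (∃ i j, D i j ≠ 0) ∧ (∀ i j, (i, j) ∉ S → D i j = 0) ∧
      (∀ i, ∑ j, D i j = 0) ∧ (∀ j, ∑ i, D i j = 0) := by
  classical
  have c1 := aux_card S Prod.fst h1
  have c2 := aux_card S Prod.snd h2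
  set R := S.image Prod.fst with hR
  set C := S.image Prod.snd with hC
  let E : (S → ℝ) → Fin m → Fin n → ℝ := fun x i j => if h : (i, j) ∈ S then x ⟨(i, j), h⟩ else 0
  let L : (S → ℝ) →ₗ[ℝ] (R → ℝ) × (C → ℝ) :=
    { toFun := fun x => (fun i => ∑ j, E x i j, fun j => ∑ i, E x i j)
      map_add' := by
        intro x y
        ext i <;> simp only [E, Prod.fst_add, Prod.snd_add, Pi.add_apply, ← Finset.sum_add_distrib] <;>
          refine Finset.sum_congr rfl fun k _ => ?_ <;> split_ifs <;> simp
      map_smul' := by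
        intro c x
        ext i <;> simp only [E, Prod.smul_fst, Prod.smul_snd, Pi.smul_apply, smul_eq_mul, Finset.mul_sum, RingHom.id_apply] <;>
          refine Finset.sum_congr rfl fun k _ => ?_ <;> split_ifs <;> simp }
  have hr0 : ∀ x i, i ∉ R → ∑ j, E x i j = 0 := by
    intro x i hi
    refine Finset.sum_eq_zero fun j _ => ?_
    have : (i, j) ∉ S := fun h => hi (Finset.mem_image.2 ⟨_, h, rfl⟩)
    simp [E, this]
  have hc0 : ∀ x j, j ∉ C → ∑ i, E x i j = 0 := by
    intro x j hj
    refine Finset.sum_eq_zero fun i _ => ?_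
    have : (i, j) ∉ S := fun h => hj (Finset.mem_image.2 ⟨_, h, rfl⟩)
    simp [E, this]
  have hninj : ¬ Function.Injective L := by
    intro hinj
    have hle := LinearMap.finrank_le_finrank_of_injective hinj
    have e1 : Module.finrank ℝ (S → ℝ) = S.card := by simp
    have e2 : Module.finrank ℝ ((R → ℝ) × (C → ℝ)) = R.card + C.card := by simp
    have hsurj := (LinearMap.injective_iff_surjective_of_finrank_eq_finrank
      (f := L) (by omega)).1 hinj
    obtain ⟨a, ha⟩ := hS
    obtain ⟨x, hx⟩ := hsurj (fun _ => 1, fun _ => 0)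
    have hx1 : ∀ i, ∑ j, E x i j = if i ∈ R then 1 else 0 := by
      intro i
      split_ifs with hi
      · exact congrFun (congrArg Prod.fst hx) ⟨i, hi⟩
      · exact hr0 x i hi
    have hx2 : ∀ j, ∑ i, E x i j = 0 := by
      intro j
      by_cases hj : j ∈ C
      · exact congrFun (congrArg Prod.snd hx) ⟨j, hj⟩
      · exact hc0 x j hj
    have hs : ∑ i, ∑ j, E x i j = 0 := by
      rw [Finset.sum_comm]; exact Finset.sum_eq_zero fun j _ => hx2 j
    rw [Finset.sum_congr rfl fun i _ => hx1 i] at hs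
    simp at hs
    have haR : a.1 ∈ R := Finset.mem_image.2 ⟨a, ha, rfl⟩
    rw [hs] at haR
    simp at haR
  rw [injective_iff_map_eq_zero] at hninj
  push Not at hninj
  obtain ⟨x, hx, hx0⟩ := hninj
  refine ⟨E x, ?_, ?_, ?_, ?_⟩
  · obtain ⟨⟨⟨i, j⟩, hs⟩, hne⟩ := Function.ne_iff.1 hx0
    exact ⟨i, j, by simpa [E, hs] using hne⟩
  · intro i j h; simp [E, h]
  · intro i
    by_cases hi : i ∈ R
    · exact congrFun (congrArg Prod.fst hx) ⟨i, hi⟩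
    · exact hr0 x i hi
  · intro j
    by_cases hj : j ∈ C
    · exact congrFun (congrArg Prod.snd hx) ⟨j, hj⟩
    · exact hc0 x j hj

lemma aux_move (a d : ℝ) (hd : d ≠ 0) (ha : Int.fract a ≠ 0) :
    ∃ t : ℝ, 0 < t ∧ Int.fract (a + t * d) = 0 ∧
      ∀ s, 0 ≤ s → s ≤ t → (⌊a⌋ : ℝ) ≤ a + s * d ∧ a + s * d ≤ (⌈a⌉ : ℝ) := by
  have hf : (⌊a⌋ : ℝ) < a := by
    have h1 := Int.floor_add_fract a
    have h2 := (Int.fract_nonneg a).lt_of_ne' ha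
    linarith
  have hc : a < (⌈a⌉ : ℝ) := by
    refine (Int.le_ceil a).lt_of_ne fun h => ha ?_
    rw [h, Int.fract_intCast]
  rcases lt_or_gt_of_ne hd with hd | hd
  · have e : (⌊a⌋ - a) / d * d = ⌊a⌋ - a := div_mul_cancel₀ _ hd.ne
    refine ⟨(⌊a⌋ - a) / d, div_pos_of_neg_of_neg (by linarith) hd, ?_, ?_⟩
    · rw [e, add_sub_cancel, Int.fract_intCast]
    · intro s hs hst
      constructor <;> nlinarith
  · have e : (⌈a⌉ - a) / d * d = ⌈a⌉ - a := div_mul_cancel₀ _ hd.ne'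
    refine ⟨(⌈a⌉ - a) / d, div_pos (by linarith) hd, ?_, ?_⟩
    · rw [e, add_sub_cancel, Int.fract_intCast]
    · intro s hs hst
      constructor <;> nlinarith

lemma aux_main {m n : ℕ} (k : ℕ) : ∀ (A : Fin m → Fin n → ℝ)
    (_ : (univ.filter fun p : Fin m × Fin n => Int.fract (A p.1 p.2) ≠ 0).card ≤ k)
    (_ : ∀ i, ∃ z : ℤ, (∑ j, A i j) = (z : ℝ))
    (_ : ∀ j, ∃ z : ℤ, (∑ i, A i j) = (z : ℝ)),
    ∃ B : Fin m → Fin n → ℤ,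
      (∀ i, (∑ j, (B i j : ℝ)) = ∑ j, A i j) ∧
      (∀ j, (∑ i, (B i j : ℝ)) = ∑ i, A i j) ∧
      (∀ i j, ⌊A i j⌋ ≤ B i j ∧ B i j ≤ ⌈A i j⌉) := by
  classical
  induction k with
  | zero =>
    intro A hA hrow hcol
    have h0 : ∀ i j, (⌊A i j⌋ : ℝ) = A i j := by
      intro i j
      have := Finset.filter_eq_empty_iff.1 (Finset.card_eq_zero.1 (Nat.le_zero.1 hA)) (mem_univ (i, j))
      have h2 := Int.floor_add_fract (A i j)
      simp only [not_not] at this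
      linarith
    refine ⟨fun i j => ⌊A i j⌋, ?_, ?_, ?_⟩
    · intro i; simp only [h0]
    · intro i; simp only [h0]
    · intro i j; exact ⟨le_rfl, Int.floor_le_ceil _⟩
  | succ k ih =>
    intro A hA hrow hcol
    set S := univ.filter fun p : Fin m × Fin n => Int.fract (A p.1 p.2) ≠ 0 with hS
    have memS : ∀ i j, (i, j) ∈ S ↔ Int.fract (A i j) ≠ 0 := by intro i j; simp [hS]
    rcases S.eq_empty_or_nonempty with he | hne
    · exact ih A (by rw [← hS, he]; simp) hrow hcol
    obtain ⟨D, ⟨i0, j0, hD0⟩, hDS, hDr, hDc⟩ := aux_D S hne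
      (by
        rintro ⟨i, j⟩ h
        obtain ⟨z, hz⟩ := hrow i
        obtain ⟨j', hj', hf⟩ := aux_two _ z hz j ((memS i j).1 h)
        exact ⟨(i, j'), (memS _ _).2 hf, by simp [hj'], rfl⟩)
      (by
        rintro ⟨i, j⟩ h
        obtain ⟨z, hz⟩ := hcol j
        obtain ⟨j', hj', hf⟩ := aux_two _ z hz i ((memS i j).1 h)
        exact ⟨(j', j), (memS _ _).2 hf, by simp [hj'], rfl⟩)
    have hSD : ∀ i j, D i j ≠ 0 → (i, j) ∈ S := fun i j h => by
      by_contra hc; exact h (hDS i j hc)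
    have hmv : ∀ p : Fin m × Fin n, ∃ t : ℝ, D p.1 p.2 ≠ 0 → (0 < t ∧
        Int.fract (A p.1 p.2 + t * D p.1 p.2) = 0 ∧
      ∀ s, 0 ≤ s → s ≤ t → (⌊A p.1 p.2⌋ : ℝ) ≤ A p.1 p.2 + s * D p.1 p.2 ∧
        A p.1 p.2 + s * D p.1 p.2 ≤ (⌈A p.1 p.2⌉ : ℝ)) := by
      intro p
      by_cases h : D p.1 p.2 = 0
      · exact ⟨0, fun h' => absurd h h'⟩
      · obtain ⟨t, ht⟩ := aux_move _ _ h ((memS p.1 p.2).1 (hSD _ _ h))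
        exact ⟨t, fun _ => ht⟩
    choose T hT using hmv
    obtain ⟨q, hq, hmin⟩ := Finset.exists_min_image
      (univ.filter fun p : Fin m × Fin n => D p.1 p.2 ≠ 0) T ⟨(i0, j0), by simpa using hD0⟩
    have hq' : D q.1 q.2 ≠ 0 := by simpa using hq
    obtain ⟨hpos, hint, -⟩ := hT q hq'
    let A' : Fin m → Fin n → ℝ := fun i j => A i j + T q * D i j
    have hr : ∀ i, ∑ j, A' i j = ∑ j, A i j := by
      intro i; simp only [A', Finset.sum_add_distrib, ← Finset.mul_sum, hDr]; simp
    have hc : ∀ j, ∑ i, A' i j = ∑ i, A i j := by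
      intro i; simp only [A', Finset.sum_add_distrib, ← Finset.mul_sum, hDc]; simp
    have hbd : ∀ i j, (⌊A i j⌋ : ℝ) ≤ A' i j ∧ A' i j ≤ (⌈A i j⌉ : ℝ) := by
      intro i j
      by_cases h : D i j = 0
      · simp only [A', h, mul_zero, add_zero]
        exact ⟨Int.floor_le _, Int.le_ceil _⟩
      · exact (hT (i, j) h).2.2 (T q) hpos.le (hmin (i, j) (by simpa using h))
    have hlt : (univ.filter fun p : Fin m × Fin n => Int.fract (A' p.1 p.2) ≠ 0).card < S.card := by
      apply Finset.card_lt_card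
      rw [Finset.ssubset_iff_of_subset]
      · exact ⟨q, hSD _ _ hq', by simpa [A'] using hint⟩
      · rintro ⟨i, j⟩ h
        by_cases hd : D i j = 0
        · rw [memS]
          simpa [A', hd] using h
        · exact hSD _ _ hd
    obtain ⟨B, hB1, hB2, hB3⟩ := ih A' (by omega) (by simpa only [hr] using hrow)
      (by simpa only [hc] using hcol)
    refine ⟨B, fun i => (hB1 i).trans (hr i), fun j => (hB2 j).trans (hc j), fun i j => ⟨?_, ?_⟩⟩
    · exact (Int.le_floor.2 (hbd i j).1).trans (hB3 i j).1
    · exact (hB3 i j).2.trans (Int.ceil_le.2 (hbd i j).2)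

/-- integer rounding in the transportation polytope: if a nonnegative real
matrix has integer row and column sums, there is a nonnegative integer matrix with the same row
and column sums whose entries differ from those of `A` by at most `1`. -/
theorem statement17 {m n : ℕ} (A : Matrix (Fin m) (Fin n) ℝ)
    (hA : ∀ i j, 0 ≤ A i j)
    (hrow : ∀ i, ∃ z : ℤ, (∑ j, A i j) = (z : ℝ))
    (hcol : ∀ j, ∃ z : ℤ, (∑ i, A i j) = (z : ℝ)) :
    ∃ B : Matrix (Fin m) (Fin n) ℤ,
      (∀ i j, 0 ≤ B i j) ∧
      (∀ i, (∑ j, (B i j : ℝ)) = ∑ j, A i j) ∧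
      (∀ j, (∑ i, (B i j : ℝ)) = ∑ i, A i j) ∧
      (∀ i j, |(B i j : ℝ) - A i j| ≤ 1) := by
  obtain ⟨B, h1, h2, h3⟩ := aux_main _ A le_rfl hrow hcol
  refine ⟨B, fun i j => (Int.floor_nonneg.2 (hA i j)).trans (h3 i j).1, h1, h2, fun i j => ?_⟩
  have a1 : (⌊A i j⌋ : ℝ) ≤ B i j := by exact_mod_cast (h3 i j).1
  have a2 : (B i j : ℝ) ≤ ⌈A i j⌉ := by exact_mod_cast (h3 i j).2
  have a3 := Int.lt_floor_add_one (A i j)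
  have a4 := Int.ceil_lt_add_one (A i j)
  rw [abs_le]
  constructor <;> linarith
end

section
/- Let X ≥ 0 be a real random variable, let a, b > 0 with a ≠ b, let α ∈ (0,1) satisfy α/a + (1−α)/b = 1, and let A, B > 0 be such that sup_{t>0} t^a·P[X > At] ≤ 1 and sup_{t>0} t^b·P[X > Bt] ≤ 1. Then E[X] ≤ K_{a,b}·A^α·B^{1−α} for a constant K_{a,b} depending only on a and b. -/
open MeasureTheory

lemma aux_tail {Ω : Type*} [MeasurableSpace Ω] (P : Measure Ω) [IsProbabilityMeasure P]
    (X : Ω → ℝ) (a A : ℝ) (hA : 0 < A)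
    (h : ∀ t : ℝ, 0 < t → t ^ a * (P {ω | A * t < X ω}).toReal ≤ 1) (s : ℝ) (hs : 0 < s) :
    P {ω | s < X ω} ≤ ENNReal.ofReal (A ^ a * s ^ (-a)) := by
  have h1 := h (s / A) (by positivity)
  rw [mul_div_cancel₀ s hA.ne'] at h1
  rw [← ENNReal.ofReal_toReal (measure_ne_top P {ω | s < X ω})]
  apply ENNReal.ofReal_le_ofReal
  have hp : 0 < s ^ a := by positivity
  have hq : 0 < A ^ a := by positivity
  rw [Real.div_rpow hs.le hA.le] at h1
  rw [Real.rpow_neg hs.le, ← div_eq_mul_inv, le_div_iff₀ hp]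
  rw [div_mul_eq_mul_div, div_le_one hq] at h1
  linarith

lemma aux_main_s18 {Ω : Type*} [MeasurableSpace Ω] (P : Measure Ω) [IsProbabilityMeasure P]
    (X : Ω → ℝ) (hX : Measurable X) (hX0 : ∀ ω, 0 ≤ X ω) (a b α A B : ℝ)
    (ha0 : 0 < a) (ha : a < 1) (hb : 1 < b) (hα : α / a + (1 - α) / b = 1)
    (hA : 0 < A) (hB : 0 < B)
    (h1 : ∀ t : ℝ, 0 < t → t ^ a * (P {ω | A * t < X ω}).toReal ≤ 1)
    (h2 : ∀ t : ℝ, 0 < t → t ^ b * (P {ω | B * t < X ω}).toReal ≤ 1) :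
    ∫ ω, X ω ∂P ≤ (|1 / (1 - a)| + |1 / (1 - b)| + 1) * A ^ α * B ^ (1 - α) := by
  have hb0 : 0 < b := by linarith
  have hba : b - a ≠ 0 := by linarith
  have hαv : α = a * (b - 1) / (b - a) := by
    field_simp at hα ⊢
    linarith
  obtain ⟨T, hT, e1, e2⟩ : ∃ T : ℝ, 0 < T ∧ A ^ a * T ^ (1 - a) = A ^ α * B ^ (1 - α) ∧
      B ^ b * T ^ (1 - b) = A ^ α * B ^ (1 - α) := by
    refine ⟨Real.exp ((b * Real.log B - a * Real.log A) / (b - a)), Real.exp_pos _, ?_, ?_⟩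
    · simp only [Real.rpow_def_of_pos hA, Real.rpow_def_of_pos hB,
        Real.rpow_def_of_pos (Real.exp_pos _), Real.log_exp, ← Real.exp_add]
      congr 1
      rw [hαv]; field_simp; ring
    · simp only [Real.rpow_def_of_pos hA, Real.rpow_def_of_pos hB,
        Real.rpow_def_of_pos (Real.exp_pos _), Real.log_exp, ← Real.exp_add]
      congr 1
      rw [hαv]; field_simp; ring
  have hpos : 0 < A ^ α * B ^ (1 - α) := by positivity
  set M := A ^ α * B ^ (1 - α) with hM
  have i1 : ∫⁻ s in Set.Ioc 0 T, P {ω | s < X ω} ≤ ENNReal.ofReal (M / (1 - a)) := by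
    calc _ ≤ ∫⁻ s in Set.Ioc 0 T, ENNReal.ofReal (A ^ a * s ^ (-a)) :=
          setLIntegral_mono' measurableSet_Ioc fun s hs => aux_tail P X a A hA h1 s hs.1
      _ = ENNReal.ofReal (∫ s in Set.Ioc 0 T, A ^ a * s ^ (-a)) := by
          rw [ofReal_integral_eq_lintegral_ofReal]
          · have := (intervalIntegral.intervalIntegrable_rpow' (a := 0) (b := T)
              (r := -a) (by linarith)).const_mul (A ^ a)
            exact (intervalIntegrable_iff_integrableOn_Ioc_of_le hT.le).1 this
          · filter_upwards [ae_restrict_mem measurableSet_Ioc] with s hs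
            have := hs.1
            simp only [Pi.zero_apply]
            positivity
      _ = _ := by
          congr 1
          rw [← intervalIntegral.integral_of_le hT.le, intervalIntegral.integral_const_mul,
            integral_rpow (Or.inl (by linarith)), Real.zero_rpow (by linarith), ← e1,
            show -a + 1 = 1 - a by ring]
          ring
  have i2 : ∫⁻ s in Set.Ioi T, P {ω | s < X ω} ≤ ENNReal.ofReal (M / (b - 1)) := by
    calc _ ≤ ∫⁻ s in Set.Ioi T, ENNReal.ofReal (B ^ b * s ^ (-b)) :=
          setLIntegral_mono' measurableSet_Ioi fun s hs =>
            aux_tail P X b B hB h2 s (hT.trans hs)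
      _ = ENNReal.ofReal (∫ s in Set.Ioi T, B ^ b * s ^ (-b)) := by
          rw [ofReal_integral_eq_lintegral_ofReal]
          · exact (integrableOn_Ioi_rpow_of_lt (by linarith) hT).const_mul _
          · filter_upwards [ae_restrict_mem measurableSet_Ioi] with s hs
            have : 0 < s := hT.trans hs
            simp only [Pi.zero_apply]
            positivity
      _ = _ := by
          congr 1
          rw [integral_const_mul, integral_Ioi_rpow_of_lt (by linarith) hT, ← e2,
            show -b + 1 = 1 - b by ring]
          have : b - 1 ≠ 0 := by linarith
          have : 1 - b ≠ 0 := by linarith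
          field_simp
          ring
  have hn1 : 0 ≤ M / (1 - a) := div_nonneg hpos.le (by linarith)
  have hn2 : 0 ≤ M / (b - 1) := div_nonneg hpos.le (by linarith)
  have key : ∫⁻ ω, ENNReal.ofReal (X ω) ∂P ≤ ENNReal.ofReal (M / (1 - a) + M / (b - 1)) := by
    rw [lintegral_eq_lintegral_meas_lt P (Filter.Eventually.of_forall hX0) hX.aemeasurable,
      ← Set.Ioc_union_Ioi_eq_Ioi hT.le, ENNReal.ofReal_add hn1 hn2]
    exact (lintegral_union_le _ _ _).trans (add_le_add i1 i2)
  rw [integral_eq_lintegral_of_nonneg_ae (Filter.Eventually.of_forall hX0)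
    hX.aestronglyMeasurable]
  refine (ENNReal.toReal_le_of_le_ofReal (by linarith) key).trans ?_
  rw [mul_assoc, ← hM, abs_of_pos (a := 1 / (1 - a)) (one_div_pos.2 (by linarith)),
    abs_of_neg (a := 1 / (1 - b)) (one_div_neg.2 (by linarith))]
  have : M / (b - 1) = - (1 / (1 - b)) * M := by
    rw [← neg_sub b 1, div_neg]; ring
  rw [this, div_eq_mul_one_div M (1 - a)]
  linarith

/-- Marcinkiewicz-type interpolation for tail bounds: if a nonnegative
random variable `X` satisfies `sup_{t>0} t^a P[X > At] ≤ 1` and `sup_{t>0} t^b P[X > Bt] ≤ 1`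
with `a ≠ b` and `α/a + (1-α)/b = 1`, `α ∈ (0,1)`, then `E[X] ≤ K_{a,b} A^α B^{1-α}`. -/
theorem statement18 : ∀ a b : ℝ, 0 < a → 0 < b → a ≠ b →
    ∃ K : ℝ, 0 < K ∧
    ∀ α : ℝ, 0 < α → α < 1 → α / a + (1 - α) / b = 1 →
    ∀ A B : ℝ, 0 < A → 0 < B →
    ∀ (Ω : Type u) [MeasurableSpace Ω] (P : Measure Ω), IsProbabilityMeasure P →
    ∀ (X : Ω → ℝ), Measurable X → (∀ ω, 0 ≤ X ω) →
    (∀ t : ℝ, 0 < t → t ^ a * (P {ω | A * t < X ω}).toReal ≤ 1) →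
    (∀ t : ℝ, 0 < t → t ^ b * (P {ω | B * t < X ω}).toReal ≤ 1) →
    ∫ ω, X ω ∂P ≤ K * A ^ α * B ^ (1 - α) := by
  intro a b ha hb hab
  refine ⟨|1 / (1 - a)| + |1 / (1 - b)| + 1, by positivity, ?_⟩
  intro α h0 h1 hα A B hA hB Ω _ P hP X hX hX0 hXa hXb
  have hα' : α * b + (1 - α) * a = a * b := by
    field_simp at hα
    linarith
  have e : α * b * (1 - a) = (1 - α) * a * (b - 1) := by linear_combination hα'
  have p1 : 0 < α * b := by positivity
  have p2 : 0 < (1 - α) * a := mul_pos (by linarith) ha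
  rcases lt_trichotomy a 1 with h | h | h
  · have : 0 < (1 - α) * a * (b - 1) := e ▸ mul_pos p1 (by linarith)
    have := (pos_iff_pos_of_mul_pos this).1 p2
    exact aux_main_s18 P X hX hX0 a b α A B ha h (by linarith) hα hA hB hXa hXb
  · exfalso
    rw [h, sub_self, mul_zero] at e
    rcases mul_eq_zero.1 e.symm with h' | h'
    · rw [h] at p2; linarith
    · apply hab; linarith
  · have hb1 : b < 1 := by
      by_contra hc
      have q1 : α * b * (1 - a) < 0 := mul_neg_of_pos_of_neg p1 (by linarith)
      have q2 : 0 ≤ (1 - α) * a * (b - 1) := mul_nonneg p2.le (by linarith)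
      linarith
    have := aux_main_s18 P X hX hX0 b a (1 - α) B A hb hb1 h
      (by rw [sub_sub_cancel]; linarith) hB hA hXb hXa
    rw [sub_sub_cancel] at this
    linarith
end
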